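/- Let θ ∈ (0, 2) be a real number and let x_1, ..., x_n be independent Bernoulli random variables with E[x_1 + ... + x_n] = 2θ. Then (1/2)·E[min(x_1 + ... + x_n, 2)] ≥ 1 − (1 + θ)·e^{-2θ}. -/

import Mathlib

/-!
We model a family of `n` independent Bernoulli random variables with means
`p : Fin n → ℝ` by their joint (product) distribution on `Fin n → Bool`:
the outcome `ω` has probability `∏ i, (if ω i then p i else 1 - p i)`.
-/

/-- number of successes in outcome `ω` -/
def bCount {n : ℕ} (ω : Fin n → Bool) : ℕ := ∑ i, if ω i then 1 else 0

/-- joint probability of the outcome `ω` for independent Bernoulli variables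
with means `p` -/
noncomputable def bernWeight {n : ℕ} (p : Fin n → ℝ) (ω : Fin n → Bool) : ℝ :=
  ∏ i, if ω i then p i else 1 - p i

/-- expectation of `g(x_1 + ⋯ + x_n)` for independent Bernoulli variables `x_i`
with means `p` -/
noncomputable def bernExp {n : ℕ} (p : Fin n → ℝ) (g : ℕ → ℝ) : ℝ :=
  ∑ ω : Fin n → Bool, bernWeight p ω * g (bCount ω)

theorem bernExp_succ {n : ℕ} (p : Fin (n+1) → ℝ) (g : ℕ → ℝ) :
    bernExp p g = (1 - p 0) * bernExp (fun i => p i.succ) g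
      + p 0 * bernExp (fun i => p i.succ) (fun c => g (c + 1)) := by
  unfold bernExp
  rw [← (Fin.consEquiv (fun _ : Fin (n+1) => Bool)).sum_comp, Fintype.sum_prod_type]
  simp only [Fintype.sum_bool, Fin.consEquiv, Equiv.coe_fn_mk, bernWeight, bCount,
    Fin.prod_univ_succ, Fin.sum_univ_succ, Fin.cons_zero, Fin.cons_succ, Finset.mul_sum]
  rw [add_comm]
  congr 1
  · refine Finset.sum_congr rfl fun x _ => ?_
    simp [mul_assoc]
  · refine Finset.sum_congr rfl fun x _ => ?_
    simp [mul_assoc, add_comm]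

theorem bernExp_const {n : ℕ} (p : Fin n → ℝ) : bernExp p (fun _ => 1) = 1 := by
  induction n with
  | zero => simp [bernExp, bernWeight]
  | succ n ih => rw [bernExp_succ, ih]; ring

theorem bernExp_none {n : ℕ} (p : Fin n → ℝ) (hp : ∀ i, 0 ≤ p i ∧ p i ≤ 1) :
    bernExp p (fun c => if c = 0 then 1 else 0) ≤ Real.exp (-∑ i, p i) := by
  induction n with
  | zero => simp [bernExp, bernWeight, bCount]
  | succ n ih =>
    rw [bernExp_succ, Fin.sum_univ_succ, neg_add, Real.exp_add]
    have h := ih (fun i => p i.succ) (fun i => hp _)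
    have h0 : bernExp (fun i => p i.succ) (fun c => if c + 1 = 0 then 1 else 0) = 0 := by
      simp [bernExp]
    rw [h0, mul_zero, add_zero]
    have := hp 0
    have h2 := Real.one_sub_le_exp_neg (p 0)
    have h1 : 0 ≤ 1 - p 0 := by linarith
    calc _ ≤ (1 - p 0) * Real.exp (-∑ i : Fin n, p i.succ) := by gcongr
      _ ≤ _ := by gcongr

theorem key_exp (p : ℝ) (h0 : 0 ≤ p) (h1 : p ≤ 1) : 2 - p ≤ (2 + p) * Real.exp (-p) := by
  have h := Real.exp_bound' h0 h1 (n := 3) (by norm_num)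
  simp [Finset.sum_range_succ, Nat.factorial] at h
  rw [Real.exp_neg, ← div_eq_mul_inv, le_div_iff₀ (Real.exp_pos p)]
  have h3 : 0 ≤ p ^ 3 := by positivity
  have h4 : 0 ≤ p ^ 4 := by positivity
  have := mul_le_mul_of_nonneg_left h (show 0 ≤ 2 - p by linarith)
  nlinarith

theorem bernExp_defect {n : ℕ} (p : Fin n → ℝ) (hp : ∀ i, 0 ≤ p i ∧ p i ≤ 1) :
    bernExp p (fun c => 2 - ((min c 2 : ℕ) : ℝ)) ≤
      (2 + ∑ i, p i) * Real.exp (-∑ i, p i) := by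
  induction n with
  | zero => simp [bernExp, bernWeight, bCount]
  | succ n ih =>
    rw [bernExp_succ, Fin.sum_univ_succ]
    have h := ih (fun i => p i.succ) (fun i => hp _)
    have hz := bernExp_none (fun i => p i.succ) (fun i => hp _)
    have hg : (fun c : ℕ => 2 - ((min (c + 1) 2 : ℕ) : ℝ)) =
        fun c => if c = 0 then 1 else 0 := by
      funext c
      rcases c with _ | c
      · norm_num
      · have : min (c + 1 + 1) 2 = 2 := by omega
        rw [this]; simp
    rw [hg]
    have hs : 0 ≤ ∑ i : Fin n, p i.succ := Finset.sum_nonneg fun i _ => (hp _).1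
    rw [neg_add, Real.exp_add]
    set s := ∑ i : Fin n, p i.succ
    obtain ⟨a, b⟩ := hp 0
    have h2 := Real.one_sub_le_exp_neg (p 0)
    have h3 := key_exp (p 0) a b
    have h1 : 0 ≤ 1 - p 0 := by linarith
    have h5 : (1 - p 0) * (2 + s) + p 0 ≤ (2 + (p 0 + s)) * Real.exp (-p 0) := by
      nlinarith [mul_le_mul_of_nonneg_left h2 hs]
    calc _ ≤ (1 - p 0) * ((2 + s) * Real.exp (-s)) + p 0 * Real.exp (-s) := by gcongr
      _ = ((1 - p 0) * (2 + s) + p 0) * Real.exp (-s) := by ring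
      _ ≤ ((2 + (p 0 + s)) * Real.exp (-p 0)) * Real.exp (-s) := by gcongr
      _ = _ := by ring

/-- For `θ ∈ (0, 2)` and independent Bernoulli variables
`x_1, …, x_n` with means `μ_i ∈ [0,1]` summing to `2θ`, we have
`(1/2)·E[min(∑ x_i, 2)] ≥ 1 − (1 + θ)·e^{-2θ}`. -/
theorem bernoulli_min_two_expectation_lower_bound (n : ℕ) (θ : ℝ)
    (hθ0 : 0 < θ) (hθ2 : θ < 2) (μ : Fin n → ℝ)
    (hμ : ∀ i, 0 ≤ μ i ∧ μ i ≤ 1) (hsum : ∑ i, μ i = 2 * θ) :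
    1 - (1 + θ) * Real.exp (-(2 * θ)) ≤
      (1 / 2 : ℝ) * bernExp μ (fun c => ((min c 2 : ℕ) : ℝ)) := by
  have h := bernExp_defect μ hμ
  have hc := bernExp_const μ
  have e : bernExp μ (fun c => 2 - ((min c 2 : ℕ) : ℝ)) =
      2 * bernExp μ (fun _ => 1) - bernExp μ (fun c => ((min c 2 : ℕ) : ℝ)) := by
    unfold bernExp
    rw [Finset.mul_sum, ← Finset.sum_sub_distrib]
    exact Finset.sum_congr rfl fun x _ => by ring
  rw [e, hc, hsum] at h
  linarith
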